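/- Let n be a positive integer and let Z_i, Z_j ∈ ℝ^{n×2} be two landmark configuration matrices such that det(Z_jᵀ Z_i) ≥ 0. Write the 2×2 matrix Z_jᵀ Z_i as [[a, b], [c, d]]. Then the minimum over all orthogonal matrices Q ∈ O(2) of the squared Frobenius norm ‖Z_j Q − Z_i‖_F² equals tr(Z_i Z_iᵀ) + tr(Z_j Z_jᵀ) − 2·√((a + d)² + (c − b)²). -/

import Mathlib

open Matrix

theorem aux_trace (n : ℕ) (Zi Zj : Matrix (Fin n) (Fin 2) ℝ) (Q : Matrix (Fin 2) (Fin 2) ℝ)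
    (hQ : Qᵀ * Q = 1) :
    Matrix.trace ((Zj * Q - Zi)ᵀ * (Zj * Q - Zi)) =
      Matrix.trace (Zi * Ziᵀ) + Matrix.trace (Zj * Zjᵀ)
        - 2 * Matrix.trace (Qᵀ * (Zjᵀ * Zi)) := by
  have hQ' : Q * Qᵀ = 1 := mul_eq_one_comm.mp hQ
  have h1 : Matrix.trace (Qᵀ * Zjᵀ * (Zj * Q)) = Matrix.trace (Zj * Zjᵀ) := by
    rw [Matrix.trace_mul_comm, Matrix.mul_assoc, ← Matrix.mul_assoc Q, hQ', Matrix.one_mul]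
  have h2 : Matrix.trace (Ziᵀ * (Zj * Q)) = Matrix.trace (Qᵀ * (Zjᵀ * Zi)) := by
    rw [← Matrix.trace_transpose]
    simp [Matrix.transpose_mul, Matrix.mul_assoc]
  rw [Matrix.transpose_sub, Matrix.transpose_mul, Matrix.sub_mul, Matrix.mul_sub, Matrix.mul_sub,
    Matrix.trace_sub, Matrix.trace_sub, Matrix.trace_sub, h1, h2, Matrix.mul_assoc,
    Matrix.trace_mul_comm Ziᵀ Zi]
  ring

/-- For `Z_i, Z_j ∈ ℝ^{n×2}` with `det(Z_jᵀ Z_i) ≥ 0`, writing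
`Z_jᵀ Z_i = [[a,b],[c,d]]`, the minimum over orthogonal `Q ∈ O(2)` of `‖Z_j Q − Z_i‖_F²`
equals `tr(Z_i Z_iᵀ) + tr(Z_j Z_jᵀ) − 2 √((a+d)² + (c−b)²)`. -/
theorem stmt1 (n : ℕ) (hn : 0 < n) (Zi Zj : Matrix (Fin n) (Fin 2) ℝ)
    (hdet : 0 ≤ (Zjᵀ * Zi).det)
    (a b c d : ℝ)
    (ha : a = (Zjᵀ * Zi) 0 0) (hb : b = (Zjᵀ * Zi) 0 1)
    (hc : c = (Zjᵀ * Zi) 1 0) (hd : d = (Zjᵀ * Zi) 1 1) :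
    IsLeast
      {x : ℝ | ∃ Q : Matrix (Fin 2) (Fin 2) ℝ, Qᵀ * Q = 1 ∧
        x = Matrix.trace ((Zj * Q - Zi)ᵀ * (Zj * Q - Zi))}
      (Matrix.trace (Zi * Ziᵀ) + Matrix.trace (Zj * Zjᵀ)
        - 2 * Real.sqrt ((a + d) ^ 2 + (c - b) ^ 2)) := by
  have hD : 0 ≤ a * d - b * c := by
    rw [Matrix.det_fin_two] at hdet
    rw [ha, hb, hc, hd]; exact hdet
  have htr : ∀ Q : Matrix (Fin 2) (Fin 2) ℝ, Matrix.trace (Qᵀ * (Zjᵀ * Zi)) =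
      Q 0 0 * a + Q 1 0 * c + (Q 0 1 * b + Q 1 1 * d) := by
    intro Q
    rw [Matrix.trace_fin_two, Matrix.mul_apply, Matrix.mul_apply, Fin.sum_univ_two,
      Fin.sum_univ_two, ha, hb, hc, hd]
    rfl
  have hS : 0 ≤ (a + d) ^ 2 + (c - b) ^ 2 := by positivity
  constructor
  · set R := Real.sqrt ((a + d) ^ 2 + (c - b) ^ 2) with hR
    have hRs : R ^ 2 = (a + d) ^ 2 + (c - b) ^ 2 := Real.sq_sqrt hS
    obtain ⟨p, r, h1, h2⟩ : ∃ p r : ℝ, p ^ 2 + r ^ 2 = 1 ∧ p * (a + d) + r * (c - b) = R := by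
      by_cases h0 : R = 0
      · refine ⟨1, 0, by norm_num, ?_⟩
        rw [h0] at hRs ⊢
        have : a + d = 0 := by nlinarith [sq_nonneg (a + d), sq_nonneg (c - b)]
        rw [this]; ring
      · refine ⟨(a + d) / R, (c - b) / R, ?_, ?_⟩
        · field_simp
          exact hRs.symm
        · field_simp
          exact hRs.symm
    have hQ : (!![p, -r; r, p])ᵀ * !![p, -r; r, p] = (1 : Matrix (Fin 2) (Fin 2) ℝ) := by
      ext i j
      fin_cases i <;> fin_cases j <;> simp [Matrix.mul_apply, Fin.sum_univ_two] <;> linarith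
    refine ⟨!![p, -r; r, p], hQ, ?_⟩
    rw [aux_trace n Zi Zj _ hQ, htr, ← h2]
    simp
    ring
  · rintro x ⟨Q, hQ, rfl⟩
    rw [aux_trace n Zi Zj Q hQ, htr]
    have e00 := congrFun (congrFun hQ 0) 0
    have e01 := congrFun (congrFun hQ 0) 1
    have e11 := congrFun (congrFun hQ 1) 1
    simp [Matrix.mul_apply, Fin.sum_univ_two] at e00 e01 e11
    generalize Q 0 0 = p at *
    generalize Q 0 1 = q at *
    generalize Q 1 0 = r at *
    generalize Q 1 1 = s at *
    have hs : s = p * (p * s - q * r) := by linear_combination (-s) * e00 + r * e01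
    have hq : q = -r * (p * s - q * r) := by linear_combination (-q) * e00 + p * e01
    have he : (p * s - q * r) ^ 2 = 1 := by
      linear_combination (q * q + s * s) * e00 + e11 - (p * q + r * s) * e01
    have key : p * a + r * c + (q * b + s * d) ≤ Real.sqrt ((a + d) ^ 2 + (c - b) ^ 2) := by
      apply Real.le_sqrt_of_sq_le
      rcases (by simpa using he : p * s - q * r = 1 ∨ p * s - q * r = -1) with h | h
      · rw [h] at hs hq
        have hs' : s = p := by linarith
        have hq' : q = -r := by linarith
        rw [hs', hq']
        have h3 : (p * a + r * c + (-r * b + p * d)) ^ 2 + (p * (c - b) - r * (a + d)) ^ 2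
            = (a + d) ^ 2 + (c - b) ^ 2 := by
          linear_combination ((a + d) ^ 2 + (c - b) ^ 2) * e00
        nlinarith [sq_nonneg (p * (c - b) - r * (a + d))]
      · rw [h] at hs hq
        have hs' : s = -p := by linarith
        have hq' : q = r := by linarith
        rw [hs', hq']
        have h3 : (p * a + r * c + (r * b + -p * d)) ^ 2 + (p * (b + c) - r * (a - d)) ^ 2
            = (a - d) ^ 2 + (b + c) ^ 2 := by
          linear_combination ((a - d) ^ 2 + (b + c) ^ 2) * e00
        nlinarith [sq_nonneg (p * (b + c) - r * (a - d))]
    linarith
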